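/- arXiv:math-ph/9905008 — 2 statements merged into one kernel-verified Lean document; each statement's English description precedes it below -/
import Mathlib

section
/- Let λ ∈ ℝ \ {0}, let α ∈ (0,1) be irrational, and let E belong to the spectrum of H_{λ,α,θ'} for some θ' ∈ [0,1). Then lim_{|w|→∞, w ∈ W_α} (1/|w|)·ln‖M(λ,E,w)‖ = 0; that is, for every ε > 0 there exists N ∈ ℕ such that every w ∈ W_α with |w| ≥ N satisfies |(1/|w|)·ln‖M(λ,E,w)‖| ≤ ε. -/
open scoped Classical

noncomputable section

/-- The Sturmian potential `v_{α,θ}(n) = χ_{[1-α,1)}(nα + θ mod 1)`. -/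
def sturmian (α θ : ℝ) (n : ℤ) : ℝ :=
  if Int.fract (n * α + θ) ∈ Set.Ico (1 - α) 1 then 1 else 0

/-- Iterates of the Gauss map, starting at `α`. -/
def cfGauss (α : ℝ) : ℕ → ℝ
  | 0 => α
  | n + 1 => Int.fract (cfGauss α n)⁻¹

/-- The continued fraction coefficients `a_n` of `α = [a_1, a_2, …]` (for `n ≥ 1`):
`a_1 = ⌊1/α⌋`, `a_2 = ⌊1/fract(1/α)⌋`, … . -/
def cfCoeff (α : ℝ) (n : ℕ) : ℕ := ⌊(cfGauss α (n - 1))⁻¹⌋₊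

/-- The standard words, with an index shift: `sWord a n` is `s_{n-1}`.  Thus
`sWord a 0 = s_{-1} = 1`, `sWord a 1 = s_0 = 0`, `sWord a 2 = s_1 = 0^{a_1 - 1} 1`, and
`sWord a (n+1) = s_n = s_{n-1}^{a_n} s_{n-2}` for `n ≥ 2`. -/
def sWord (a : ℕ → ℕ) : ℕ → List ℝ
  | 0 => [1]
  | 1 => [0]
  | 2 => List.replicate (a 1 - 1) (0 : ℝ) ++ [1]
  | n + 3 => (List.replicate (a (n + 2)) (sWord a (n + 2))).flatten ++ sWord a (n + 1)

/-- The `n`-th letter (for `n ≥ 1`) of the one-sided infinite word `c_α = lim s_n`: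
since `|s_n| ≥ n`, it is the `n`-th letter of `s_n`. -/
def cword (α : ℝ) (n : ℕ) : ℝ := (sWord (cfCoeff α) (n + 1)).getD (n - 1) 0

/-- `w` is a (finite) prefix of the one-sided infinite word `c_α`. -/
def IsPrefC (α : ℝ) (w : List ℝ) : Prop :=
  w = (List.range w.length).map fun i => cword α (i + 1)

/-- The one-step transfer matrix `T(λ,E,a) = [[E - λa, -1], [1, 0]]`. -/
def transferT (lam : ℝ) (E : ℂ) (a : ℝ) : Matrix (Fin 2) (Fin 2) ℂ :=
  !![E - lam * a, -1; 1, 0]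

/-- The transfer matrix over a word `w = w_1 … w_n`:
`M(λ,E,w) = T(λ,E,w_n) ⋯ T(λ,E,w_1)`. -/
def transferM (lam : ℝ) (E : ℂ) : List ℝ → Matrix (Fin 2) (Fin 2) ℂ
  | [] => 1
  | a :: w => transferM lam E w * transferT lam E a

/-- The operator norm on `ℂ²` (with the euclidean norm) of a `2 × 2` complex matrix. -/
def opNorm (A : Matrix (Fin 2) (Fin 2) ℂ) : ℝ :=
  ‖Matrix.toEuclideanCLM (𝕜 := ℂ) A‖

/-- The word `v_{α,θ}^n = v_{α,θ}(1) … v_{α,θ}(n)`. -/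
def sturmianWord (α θ : ℝ) (n : ℕ) : List ℝ :=
  (List.range n).map fun k => sturmian α θ (k + 1)

/-- The set of finite nonempty subwords of a two-sided sequence `v : ℤ → ℝ`. -/
def SubZ (v : ℤ → ℝ) : Set (List ℝ) :=
  {w | w ≠ [] ∧ ∃ k : ℤ, w = (List.range w.length).map fun i => v (k + i)}

/-- The set of finite nonempty subwords of the one-sided word `c_α` (indexed from `1`). -/
def SubC (α : ℝ) : Set (List ℝ) :=
  {w | w ≠ [] ∧ ∃ k : ℕ, 1 ≤ k ∧ w = (List.range w.length).map fun i => cword α (k + i)}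

/-- `W_α`, the set of all finite nonempty subwords of the sequences `v_{α,θ}`, `θ ∈ [0,1)`. -/
def Walpha (α : ℝ) : Set (List ℝ) :=
  {w | ∃ θ ∈ Set.Ico (0 : ℝ) 1, w ∈ SubZ (sturmian α θ)}

/-- `α` is a bounded density number: `limsup_{n→∞} (1/n) ∑_{j=1}^n a_j < ∞` for the
continued fraction coefficients `a_j` of `α`. -/
def BoundedDensity (α : ℝ) : Prop :=
  Filter.IsBoundedUnder (· ≤ ·) Filter.atTop
    (fun n : ℕ => (1 / n : ℝ) * ∑ j ∈ Finset.Icc 1 n, (cfCoeff α j : ℝ))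

end

/-!
Let `E` be in the spectrum. For every length `n`, an `ℓ²` approximate eigenfunction has a
site at which it is at least half as large as at the two sites at distance `n / 2`. This forces
cancellation between the transfer matrices over the two adjacent words of length `n / 2`: the norm
over the joined word is at most three times the sum, rather than the product, of their norms.
In a Sturmian sequence there are infinitely many `n` such that this word occurs in every window
of length `3 n`. If the exponent were positive, every window would lose a fixed proportion of the
maximal growth, contradicting subadditivity.

The scales `n` come from best approximations: if `q < m` are denominators of consecutive ones, then
the phases coding a word of length `m - 1` fill an interval of length at least `‖q α‖`, which every
orbit segment of `q + m` points of the rotation by `α` meets.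
-/

open Filter

/-! ### Unimodular `2 × 2` matrices -/

local notation "ℂ²" => EuclideanSpace ℂ (Fin 2)

local notation "𝓛" => Matrix.toEuclideanCLM (n := Fin 2) (𝕜 := ℂ)

/-- The symplectic form on `ℂ²`, whose invariance under matrices of determinant one replaces
every use of inverse matrices below. -/
def wedge (x y : ℂ²) : ℂ := x 0 * y 1 - x 1 * y 0

lemma toEuclideanCLM_apply_fin_two (A : Matrix (Fin 2) (Fin 2) ℂ) (x : ℂ²) (i : Fin 2) :
    𝓛 A x i = A i 0 * x 0 + A i 1 * x 1 := by
  simp [Matrix.ofLp_toEuclideanCLM, Matrix.mulVec, dotProduct, Fin.sum_univ_two]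

lemma wedge_toEuclideanCLM (A : Matrix (Fin 2) (Fin 2) ℂ) (x y : ℂ²) :
    wedge (𝓛 A x) (𝓛 A y) = A.det * wedge x y := by
  simp only [wedge, toEuclideanCLM_apply_fin_two, Matrix.det_fin_two]
  ring

lemma norm_inner_sq_add_norm_wedge_sq (x y : ℂ²) :
    ‖inner ℂ x y‖ ^ 2 + ‖wedge x y‖ ^ 2 = ‖x‖ ^ 2 * ‖y‖ ^ 2 := by
  simp only [EuclideanSpace.norm_sq_eq, PiLp.inner_apply, Fin.sum_univ_two, wedge,
    RCLike.inner_apply, Complex.sq_norm, Complex.normSq_apply, Complex.add_re, Complex.add_im,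
    Complex.sub_re, Complex.sub_im, Complex.mul_re, Complex.mul_im, Complex.conj_re,
    Complex.conj_im]
  ring

lemma norm_wedge_le (x y : ℂ²) : ‖wedge x y‖ ≤ ‖x‖ * ‖y‖ := by
  refine le_of_sq_le_sq ?_ (by positivity)
  rw [mul_pow, ← norm_inner_sq_add_norm_wedge_sq]
  exact le_add_of_nonneg_left (by positivity)

lemma opNorm_nonneg (A : Matrix (Fin 2) (Fin 2) ℂ) : 0 ≤ opNorm A := norm_nonneg _

lemma norm_toEuclideanCLM_le (A : Matrix (Fin 2) (Fin 2) ℂ) (x : ℂ²) :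
    ‖𝓛 A x‖ ≤ opNorm A * ‖x‖ :=
  ContinuousLinearMap.le_opNorm _ _

lemma opNorm_mul_le (A B : Matrix (Fin 2) (Fin 2) ℂ) : opNorm (A * B) ≤ opNorm A * opNorm B := by
  simpa only [opNorm, map_mul] using norm_mul_le (𝓛 A) (𝓛 B)

lemma one_le_opNorm_of_det_eq_one {A : Matrix (Fin 2) (Fin 2) ℂ} (hA : A.det = 1) :
    1 ≤ opNorm A := by
  set e₀ : ℂ² := EuclideanSpace.single 0 1
  set e₁ : ℂ² := EuclideanSpace.single 1 1
  rw [← one_le_sq_iff₀ (opNorm_nonneg A)]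
  calc (1 : ℝ) = ‖wedge (𝓛 A e₀) (𝓛 A e₁)‖ := by
        rw [wedge_toEuclideanCLM, hA]; simp [wedge, e₀, e₁]
    _ ≤ ‖𝓛 A e₀‖ * ‖𝓛 A e₁‖ := norm_wedge_le _ _
    _ ≤ (opNorm A * ‖e₀‖) * (opNorm A * ‖e₁‖) :=
        mul_le_mul (norm_toEuclideanCLM_le _ _) (norm_toEuclideanCLM_le _ _) (norm_nonneg _)
          (mul_nonneg (opNorm_nonneg A) (norm_nonneg _))
    _ = opNorm A ^ 2 := by simp [e₀, e₁, sq]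

lemma norm_apply_mul_norm_le (L : ℂ² →L[ℂ] ℂ²) (e z : ℂ²) :
    ‖L z‖ * ‖e‖ ≤ ‖L e‖ * ‖z‖ + ‖L‖ * ‖wedge e z‖ := by
  rcases eq_or_ne e 0 with rfl | he
  · simp only [norm_zero, mul_zero, map_zero, zero_mul, zero_add]; positivity
  have hinner : inner ℂ e e ≠ 0 := inner_self_ne_zero.2 he
  set c : ℂ := inner ℂ e z / inner ℂ e e
  set w : ℂ² := z - c • e
  have hz : z = c • e + w := (add_sub_cancel _ _).symm
  have hc : ‖c‖ * ‖e‖ ≤ ‖z‖ := by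
    have hself : ‖inner ℂ e e‖ = ‖e‖ * ‖e‖ := by
      rw [inner_self_eq_norm_sq_to_K, norm_pow, RCLike.norm_ofReal, abs_norm, sq]
    rw [norm_div, div_mul_eq_mul_div, div_le_iff₀ (norm_pos_iff.2 hinner), hself]
    calc ‖inner ℂ e z‖ * ‖e‖ ≤ ‖e‖ * ‖z‖ * ‖e‖ := by gcongr; exact norm_inner_le_norm e z
      _ = ‖z‖ * (‖e‖ * ‖e‖) := by ring
  have hw_orth : inner ℂ e w = 0 := by
    rw [inner_sub_right, inner_smul_right, div_mul_cancel₀ _ hinner, sub_self]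
  have hw_wedge : wedge e w = wedge e z := by
    simp only [wedge, w, PiLp.sub_apply, PiLp.smul_apply, smul_eq_mul]; ring
  have hw : ‖w‖ * ‖e‖ = ‖wedge e z‖ := by
    have := norm_inner_sq_add_norm_wedge_sq e w
    rw [hw_orth, hw_wedge, norm_zero, zero_pow two_ne_zero, zero_add, ← mul_pow,
      sq_eq_sq₀ (norm_nonneg _) (by positivity)] at this
    rw [this, mul_comm]
  calc ‖L z‖ * ‖e‖ = ‖c • L e + L w‖ * ‖e‖ := by rw [hz, map_add, map_smul]
    _ ≤ (‖c‖ * ‖L e‖ + ‖L‖ * ‖w‖) * ‖e‖ := by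
        gcongr
        refine (norm_add_le _ _).trans ?_
        rw [norm_smul]
        gcongr
        exact L.le_opNorm w
    _ = ‖L e‖ * (‖c‖ * ‖e‖) + ‖L‖ * (‖w‖ * ‖e‖) := by ring
    _ ≤ ‖L e‖ * ‖z‖ + ‖L‖ * ‖wedge e z‖ := by rw [hw]; gcongr

/-- When `A y ≈ e`, the identity `wedge (A y) (A x) = wedge y x` bounds the component of `A x`
orthogonal to `e`, while `B` does little to the component along `e`. -/
lemma opNorm_mul_mul_norm_le {A : Matrix (Fin 2) (Fin 2) ℂ} (hA : A.det = 1)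
    (B : Matrix (Fin 2) (Fin 2) ℂ) (e y : ℂ²) :
    opNorm (B * A) * ‖e‖ ≤
      opNorm A * ‖𝓛 B e‖ + opNorm B * (‖y‖ + opNorm A * ‖𝓛 A y - e‖) := by
  have hA₀ := opNorm_nonneg A
  have hB₀ := opNorm_nonneg B
  rcases eq_or_ne e 0 with rfl | he
  · rw [norm_zero, mul_zero]; positivity
  have hwedge (x : ℂ²) :
      ‖wedge e (𝓛 A x)‖ ≤ (‖y‖ + opNorm A * ‖𝓛 A y - e‖) * ‖x‖ := by
    have hsplit : wedge e (𝓛 A x) = wedge y x - wedge (𝓛 A y - e) (𝓛 A x) := by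
      rw [← one_mul (wedge y x), ← hA, ← wedge_toEuclideanCLM]
      simp only [wedge, PiLp.sub_apply]; ring
    calc ‖wedge e (𝓛 A x)‖ ≤ ‖y‖ * ‖x‖ + ‖𝓛 A y - e‖ * ‖𝓛 A x‖ := by
          rw [hsplit]
          exact (norm_sub_le _ _).trans (add_le_add (norm_wedge_le _ _) (norm_wedge_le _ _))
      _ ≤ ‖y‖ * ‖x‖ + ‖𝓛 A y - e‖ * (opNorm A * ‖x‖) := by
          gcongr; exact norm_toEuclideanCLM_le A x
      _ = _ := by ring
  rw [← le_div_iff₀ (norm_pos_iff.2 he)]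
  refine ContinuousLinearMap.opNorm_le_bound _ (by positivity) fun x => ?_
  rw [div_mul_eq_mul_div, le_div_iff₀ (norm_pos_iff.2 he), map_mul]
  calc ‖𝓛 B (𝓛 A x)‖ * ‖e‖ ≤ ‖𝓛 B e‖ * ‖𝓛 A x‖ + opNorm B * ‖wedge e (𝓛 A x)‖ :=
        norm_apply_mul_norm_le _ _ _
    _ ≤ ‖𝓛 B e‖ * (opNorm A * ‖x‖) +
          opNorm B * ((‖y‖ + opNorm A * ‖𝓛 A y - e‖) * ‖x‖) := by
        gcongr
        · exact norm_toEuclideanCLM_le A x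
        · exact hwedge x
    _ = _ := by ring

lemma opNorm_mul_le_three_mul_add {A B : Matrix (Fin 2) (Fin 2) ℂ} (hA : A.det = 1) {e y : ℂ²}
    (he : 0 < ‖e‖) (hy : ‖y‖ ≤ 2 * ‖e‖) (hBe : ‖𝓛 B e‖ ≤ 3 * ‖e‖)
    (herr : opNorm A * ‖𝓛 A y - e‖ ≤ ‖e‖) :
    opNorm (B * A) ≤ 3 * (opNorm A + opNorm B) := by
  refine le_of_mul_le_mul_right ?_ he
  calc opNorm (B * A) * ‖e‖ ≤
        opNorm A * ‖𝓛 B e‖ + opNorm B * (‖y‖ + opNorm A * ‖𝓛 A y - e‖) :=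
        opNorm_mul_mul_norm_le hA B e y
    _ ≤ opNorm A * (3 * ‖e‖) + opNorm B * (2 * ‖e‖ + ‖e‖) := by
        gcongr <;> exact opNorm_nonneg _
    _ = 3 * (opNorm A + opNorm B) * ‖e‖ := by ring

/-! ### Transfer matrices along a sequence -/

/-- The factor `v_k v_{k+1} … v_{k+n-1}` of length `n` of a two-sided sequence. -/
def factor (v : ℤ → ℝ) (k : ℤ) (n : ℕ) : List ℝ := (List.range n).map fun i : ℕ => v (k + i)

lemma factor_add (v : ℤ → ℝ) (k : ℤ) (m n : ℕ) :
    factor v k (m + n) = factor v k m ++ factor v (k + m) n := by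
  simp only [factor, List.range_add, List.map_append, List.map_map, Function.comp_def,
    Nat.cast_add, add_assoc]

lemma take_factor (v : ℤ → ℝ) (k : ℤ) {m n : ℕ} (h : m ≤ n) :
    (factor v k n).take m = factor v k m := by
  rw [factor, ← List.map_take, List.take_range, min_eq_left h, factor]

lemma transferM_append (lam : ℝ) (E : ℂ) (u w : List ℝ) :
    transferM lam E (u ++ w) = transferM lam E w * transferM lam E u := by
  induction u with
  | nil => simp only [List.nil_append, transferM, mul_one]
  | cons a u ih => simp only [List.cons_append, transferM, ih, mul_assoc]

lemma det_transferM (lam : ℝ) (E : ℂ) (w : List ℝ) : (transferM lam E w).det = 1 := by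
  induction w with
  | nil => simp [transferM]
  | cons a w ih => simp [transferM, ih, transferT, Matrix.det_fin_two]

lemma one_le_opNorm_transferM (lam : ℝ) (E : ℂ) (w : List ℝ) : 1 ≤ opNorm (transferM lam E w) :=
  one_le_opNorm_of_det_eq_one (det_transferM lam E w)

section Transfer

variable {lam : ℝ} {E : ℂ} {v : ℤ → ℝ} {B : ℝ}

lemma transferM_factor_succ (k : ℤ) (n : ℕ) :
    transferM lam E (factor v k (n + 1)) =
      transferT lam E (v (k + n)) * transferM lam E (factor v k n) := by
  rw [factor_add, transferM_append]
  simp [factor, transferM]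

lemma one_le_of_opNorm_transferT_le (hB : ∀ k, opNorm (transferT lam E (v k)) ≤ B) : 1 ≤ B := by
  refine le_trans ?_ (hB 0)
  simpa only [transferM, one_mul] using one_le_opNorm_transferM lam E [v 0]

lemma opNorm_transferM_factor_le (hB : ∀ k, opNorm (transferT lam E (v k)) ≤ B) (k : ℤ) (n : ℕ) :
    opNorm (transferM lam E (factor v k n)) ≤ B ^ n := by
  induction n with
  | zero => simp [factor, transferM, opNorm]
  | succ n ih =>
    rw [transferM_factor_succ, pow_succ']
    exact (opNorm_mul_le _ _).trans
      (mul_le_mul (hB _) ih (opNorm_nonneg _) ((opNorm_nonneg _).trans (hB k)))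

variable (lam E) in
lemma exists_forall_opNorm_transferT_le (hv : (Set.range v).Finite) :
    ∃ B, ∀ k, opNorm (transferT lam E (v k)) ≤ B := by
  obtain ⟨B, hB⟩ := (hv.image fun a => opNorm (transferT lam E a)).bddAbove
  exact ⟨B, fun k => hB ⟨v k, ⟨k, rfl⟩, rfl⟩⟩

/-- The vector `(ψ(k), ψ(k-1))` that the transfer matrices propagate. -/
def stateVec (ψ : ℤ → ℂ) (k : ℤ) : ℂ² := !₂[ψ k, ψ (k - 1)]

/-- The error `((H - E) ψ)(k)` of an approximate solution `ψ` of the eigenvalue equation with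
potential `lam * v`. -/
def eigenResidual (lam : ℝ) (v : ℤ → ℝ) (E : ℂ) (ψ : ℤ → ℂ) (k : ℤ) : ℂ :=
  ψ (k + 1) + ψ (k - 1) + (lam * v k : ℝ) * ψ k - E * ψ k

lemma norm_stateVec_sq (ψ : ℤ → ℂ) (k : ℤ) :
    ‖stateVec ψ k‖ ^ 2 = ‖ψ k‖ ^ 2 + ‖ψ (k - 1)‖ ^ 2 := by
  simp [EuclideanSpace.norm_sq_eq, Fin.sum_univ_two, stateVec]

variable (lam E v) in
lemma stateVec_add_one (ψ : ℤ → ℂ) (k : ℤ) :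
    stateVec ψ (k + 1) = 𝓛 (transferT lam E (v k)) (stateVec ψ k) +
      EuclideanSpace.single 0 (eigenResidual lam v E ψ k) := by
  ext i
  rw [PiLp.add_apply, toEuclideanCLM_apply_fin_two]
  fin_cases i
  · simp [stateVec, transferT, eigenResidual]; ring
  · simp [stateVec, transferT]

lemma norm_stateVec_sub_le (hB : ∀ k, opNorm (transferT lam E (v k)) ≤ B) (ψ : ℤ → ℂ) (k : ℤ)
    (n : ℕ) {ρ : ℝ} (hρ : 0 ≤ ρ) (hψ : ∀ i < n, ‖eigenResidual lam v E ψ (k + i)‖ ≤ ρ) :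
    ‖stateVec ψ (k + n) - 𝓛 (transferM lam E (factor v k n)) (stateVec ψ k)‖ ≤ n * B ^ n * ρ := by
  have hB₁ : 1 ≤ B := one_le_of_opNorm_transferT_le hB
  induction n with
  | zero => simp [factor, transferM]
  | succ n ih =>
    set T := transferT lam E (v (k + n))
    set Δ := stateVec ψ (k + n) - 𝓛 (transferM lam E (factor v k n)) (stateVec ψ k)
    set r := eigenResidual lam v E ψ (k + n)
    have hstep : stateVec ψ (k + (n + 1 : ℕ)) -
        𝓛 (transferM lam E (factor v k (n + 1))) (stateVec ψ k) =
          𝓛 T Δ + EuclideanSpace.single 0 r := by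
      rw [Nat.cast_succ, ← add_assoc, stateVec_add_one lam E v, transferM_factor_succ, map_mul,
        map_sub]
      exact add_sub_right_comm _ _ _
    calc _ ≤ ‖𝓛 T Δ‖ + ‖(EuclideanSpace.single 0 r : ℂ²)‖ := hstep ▸ norm_add_le _ _
      _ ≤ B * (n * B ^ n * ρ) + ρ := by
        refine add_le_add ((norm_toEuclideanCLM_le _ _).trans ?_) ?_
        · exact mul_le_mul (hB _) (ih fun i hi => hψ i (hi.trans n.lt_succ_self)) (norm_nonneg _)
            (zero_le_one.trans hB₁)
        · simpa using hψ n n.lt_succ_self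
      _ ≤ B * (n * B ^ n * ρ) + B ^ (n + 1) * ρ := by
        gcongr
        exact le_mul_of_one_le_left hρ (one_le_pow₀ hB₁)
      _ = (n + 1 : ℕ) * B ^ (n + 1) * ρ := by push_cast; ring

end Transfer

/-! ### Approximate eigenfunctions -/

lemma exists_norm_apply_sub_smul_lt {F : Type*} [NormedAddCommGroup F] [InnerProductSpace ℂ F]
    [CompleteSpace F] {H : F →L[ℂ] F} [IsStarNormal H] {E : ℂ} (hE : E ∈ spectrum ℂ H)
    {d : ℝ} (hd : 0 < d) : ∃ u : F, ‖H u - E • u‖ < d * ‖u‖ := by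
  by_contra! hbelow
  set K : F →L[ℂ] F := algebraMap ℂ _ E - H
  have hK (u : F) : d * ‖u‖ ≤ ‖K u‖ := by
    have : K u = E • u - H u := by simp [K, Algebra.algebraMap_eq_smul_one]
    rw [this, norm_sub_rev]
    exact hbelow u
  have hKstar : Commute (star K) K := by
    have hscalar (c : ℂ) (L : F →L[ℂ] F) : Commute (algebraMap ℂ _ c) L := Algebra.commutes c L
    rw [star_sub, ← algebraMap_star_comm]
    exact (hscalar _ _).sub_left ((hscalar _ _).symm.sub_right (star_comm_self' H))
  have hunit : IsUnit (star K * K) := by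
    refine ContinuousLinearMap.isUnit_of_forall_le_norm_inner_map (star K * K)
      (c := ⟨d ^ 2, by positivity⟩) (by change (0 : ℝ) < d ^ 2; positivity) fun u => ?_
    have hinner : inner ℂ ((star K * K) u) u = inner ℂ (K u) (K u) :=
      ContinuousLinearMap.adjoint_inner_left K u (K u)
    rw [hinner, inner_self_eq_norm_sq_to_K, norm_pow, RCLike.norm_ofReal, abs_norm]
    calc ‖u‖ ^ 2 * d ^ 2 = (d * ‖u‖) ^ 2 := by ring
      _ ≤ ‖K u‖ ^ 2 := by gcongr; exact hK u
  exact hE (hKstar.isUnit_mul_iff.1 hunit).2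

local notation "ℓ²(ℤ)" => lp (fun _ : ℤ => ℂ) 2

/-- `H` is the Schrödinger operator on `ℓ²(ℤ)` with potential `lam * v`. -/
def IsSchrodingerOperator (lam : ℝ) (v : ℤ → ℝ) (H : ℓ²(ℤ) →L[ℂ] ℓ²(ℤ)) : Prop :=
  ∀ (u : ℓ²(ℤ)) (n : ℤ), H u n = u (n + 1) + u (n - 1) + (lam * v n : ℝ) * u n

lemma hasSum_norm_sq (u : ℓ²(ℤ)) : HasSum (fun n : ℤ => ‖u n‖ ^ 2) (‖u‖ ^ 2) := by
  simpa using lp.hasSum_norm (p := 2) (by norm_num) u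

lemma hasSum_comp_add_right {G M : Type*} [AddGroup G] [AddCommMonoid M] [TopologicalSpace M]
    {f : G → M} {s : M} (hf : HasSum f s) (c : G) : HasSum (fun n => f (n + c)) s :=
  (Equiv.addRight c).hasSum_iff.2 hf

lemma memℓp_comp_add_right (u : ℓ²(ℤ)) (c : ℤ) : Memℓp (fun n => u (n + c)) 2 :=
  memℓp_gen (by simpa using (hasSum_comp_add_right (hasSum_norm_sq u) c).summable)

lemma exists_lt_of_hasSum_lt {ι : Type*} {f g : ι → ℝ} {a b : ℝ} (hf : HasSum f a)
    (hg : HasSum g b) (hab : a < b) : ∃ i, f i < g i := by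
  by_contra! h
  exact hab.not_ge (hasSum_le h hg hf)

namespace IsSchrodingerOperator

variable {lam : ℝ} {v : ℤ → ℝ} {H : ℓ²(ℤ) →L[ℂ] ℓ²(ℤ)}

lemma isSelfAdjoint (hH : IsSchrodingerOperator lam v H) : IsSelfAdjoint H := by
  rw [ContinuousLinearMap.isSelfAdjoint_iff_isSymmetric]
  intro x y
  change inner ℂ (H x) y = inner ℂ x (H y)
  set xl : ℓ²(ℤ) := ⟨_, memℓp_comp_add_right x 1⟩
  set xr : ℓ²(ℤ) := ⟨_, memℓp_comp_add_right x (-1)⟩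
  -- summation by parts: move the hopping terms of `H x` by one site onto `y`
  have hl := lp.hasSum_inner (𝕜 := ℂ) xl y
  have hr := lp.hasSum_inner (𝕜 := ℂ) xr y
  have hshifted := (((lp.hasSum_inner (𝕜 := ℂ) (H x) y).sub hl).sub hr).add
    (hasSum_comp_add_right hl (-1)) |>.add (hasSum_comp_add_right hr 1)
  have hsum := hshifted.unique ((lp.hasSum_inner (𝕜 := ℂ) x (H y)).congr_fun fun n => ?_)
  · rw [← hsum]; ring
  · simp only [xl, xr, hH _ _, RCLike.inner_apply, map_add, map_mul, Complex.conj_ofReal,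
      ← sub_eq_add_neg, add_sub_cancel_right, sub_add_cancel]
    ring

lemma sub_smul_apply (hH : IsSchrodingerOperator lam v H) (E : ℂ) (u : ℓ²(ℤ)) (n : ℤ) :
    (H u - E • u) n = eigenResidual lam v E u n := by
  change H u n - E * u n = _
  rw [hH, eigenResidual]

/-- The weights are such that, summed over all sites `m`, the left side would be at most
`5 ‖u‖ ^ 2` and the right side is `6 ‖u‖ ^ 2`. -/
lemma exists_local_estimate (hH : IsSchrodingerOperator lam v H) {E : ℂ} (hE : E ∈ spectrum ℂ H)
    (n₁ n₂ : ℕ) {K : ℝ} (hK : 0 ≤ K) :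
    ∃ (ψ : ℤ → ℂ) (m : ℤ), ‖stateVec ψ (m - n₁)‖ ^ 2 + ‖stateVec ψ (m + n₂)‖ ^ 2 +
      K * ∑ i ∈ Finset.range (n₁ + n₂), ‖eigenResidual lam v E ψ (m - n₁ + i)‖ ^ 2 <
        3 * ‖stateVec ψ m‖ ^ 2 := by
  have : IsStarNormal H := hH.isSelfAdjoint.isStarNormal
  set n := n₁ + n₂
  obtain ⟨d, hd, hKd⟩ := exists_pos_mul_lt one_pos (K * n)
  obtain ⟨u, hu⟩ := exists_norm_apply_sub_smul_lt hE (Real.sqrt_pos.2 hd)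
  set φ := H u - E • u with hφ
  have hu₀ : 0 < ‖u‖ := pos_of_mul_pos_right ((norm_nonneg _).trans_lt hu) (Real.sqrt_nonneg _)
  have hφu : K * (n * ‖φ‖ ^ 2) ≤ ‖u‖ ^ 2 := by
    calc K * (n * ‖φ‖ ^ 2) = (K * n) * ‖φ‖ ^ 2 := by ring
      _ ≤ (K * n) * (√d * ‖u‖) ^ 2 := by gcongr
      _ = (K * n * d) * ‖u‖ ^ 2 := by rw [mul_pow, Real.sq_sqrt hd.le]; ring
      _ ≤ ‖u‖ ^ 2 := mul_le_of_le_one_left (by positivity) hKd.le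
  have hstate : HasSum (fun m => ‖stateVec u m‖ ^ 2) (‖u‖ ^ 2 + ‖u‖ ^ 2) := by
    simp only [norm_stateVec_sq]
    exact (hasSum_norm_sq u).add (hasSum_comp_add_right (hasSum_norm_sq u) (-1))
  have hresidual : HasSum
      (fun m : ℤ => ∑ i ∈ Finset.range n, ‖eigenResidual lam v E u (m - n₁ + i)‖ ^ 2)
      (n * ‖φ‖ ^ 2) := by
    have h : HasSum (fun m : ℤ => ∑ i ∈ Finset.range n, ‖φ (m + (-n₁ + i))‖ ^ 2)
        (∑ _i ∈ Finset.range n, ‖φ‖ ^ 2) :=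
      hasSum_sum fun i _ => hasSum_comp_add_right (hasSum_norm_sq φ) (-n₁ + i)
    simpa only [hφ, hH.sub_smul_apply, ← add_assoc, ← sub_eq_add_neg, Finset.sum_const,
      Finset.card_range, nsmul_eq_mul] using h
  refine ⟨u, exists_lt_of_hasSum_lt (((hasSum_comp_add_right hstate (-n₁)).add
    (hasSum_comp_add_right hstate n₂)).add (hresidual.mul_left K)) (hstate.mul_left 3) ?_⟩
  linarith [pow_pos hu₀ 2]

lemma exists_approximate_solution (hH : IsSchrodingerOperator lam v H) {E : ℂ}
    (hE : E ∈ spectrum ℂ H) (n₁ n₂ : ℕ) {ρ : ℝ} (hρ : 0 < ρ) :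
    ∃ (ψ : ℤ → ℂ) (m : ℤ), 0 < ‖stateVec ψ m‖ ∧ ‖stateVec ψ (m - n₁)‖ ≤ 2 * ‖stateVec ψ m‖ ∧
      ‖stateVec ψ (m + n₂)‖ ≤ 2 * ‖stateVec ψ m‖ ∧
      ∀ i < n₁ + n₂, ‖eigenResidual lam v E ψ (m - n₁ + i)‖ ≤ ρ * ‖stateVec ψ m‖ := by
  obtain ⟨ψ, m, hψ⟩ := hH.exists_local_estimate hE n₁ n₂ (K := 3 / ρ ^ 2) (by positivity)
  set S := ∑ i ∈ Finset.range (n₁ + n₂), ‖eigenResidual lam v E ψ (m - n₁ + i)‖ ^ 2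
  have hl := sq_nonneg ‖stateVec ψ (m - n₁)‖
  have hr := sq_nonneg ‖stateVec ψ (m + n₂)‖
  have hS : 0 ≤ 3 / ρ ^ 2 * S := by positivity
  have htwice {x : ℝ} (hx : x ^ 2 < 3 * ‖stateVec ψ m‖ ^ 2) : x ≤ 2 * ‖stateVec ψ m‖ := by
    refine le_of_sq_le_sq ?_ (by positivity)
    linarith [mul_pow 2 ‖stateVec ψ m‖ 2, sq_nonneg ‖stateVec ψ m‖]
  refine ⟨ψ, m, ?_, htwice (by linarith), htwice (by linarith), fun i hi => ?_⟩
  · refine (norm_nonneg _).lt_of_ne fun h => ?_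
    rw [← h] at hψ
    linarith
  · refine le_of_sq_le_sq ?_ (by positivity)
    have hi_le : ‖eigenResidual lam v E ψ (m - n₁ + i)‖ ^ 2 ≤ S :=
      Finset.single_le_sum (f := fun i : ℕ => ‖eigenResidual lam v E ψ (m - n₁ + i)‖ ^ 2)
        (fun _ _ => by positivity) (Finset.mem_range.2 hi)
    have hS_lt : 3 / ρ ^ 2 * S < 3 * ‖stateVec ψ m‖ ^ 2 := by linarith
    rw [div_mul_eq_mul_div, div_lt_iff₀ (by positivity)] at hS_lt
    linarith [mul_pow ρ ‖stateVec ψ m‖ 2]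

lemma exists_opNorm_transferM_factor_add_le (hH : IsSchrodingerOperator lam v H) {E : ℂ}
    (hE : E ∈ spectrum ℂ H) {B : ℝ} (hB : ∀ k, opNorm (transferT lam E (v k)) ≤ B) (n₁ n₂ : ℕ) :
    ∃ k : ℤ, opNorm (transferM lam E (factor v k (n₁ + n₂))) ≤
      3 * (opNorm (transferM lam E (factor v k n₁)) +
        opNorm (transferM lam E (factor v (k + n₁) n₂))) := by
  have hB₁ := one_le_of_opNorm_transferT_le hB
  have hleft₀ : 0 ≤ B ^ n₁ * (n₁ * B ^ n₁) := by positivity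
  have hright₀ : 0 ≤ n₂ * B ^ n₂ := by positivity
  obtain ⟨ρ, hρ, hρB⟩ := exists_pos_mul_lt one_pos (B ^ n₁ * (n₁ * B ^ n₁) + n₂ * B ^ n₂)
  obtain ⟨ψ, m, hm, hl, hr, hψ⟩ := hH.exists_approximate_solution hE n₁ n₂ hρ
  set e := stateVec ψ m
  have hρe : 0 ≤ ρ * ‖e‖ := by positivity
  have hleft := norm_stateVec_sub_le hB ψ (m - n₁) n₁ hρe fun i hi => hψ i (by lia)
  have hright := norm_stateVec_sub_le hB ψ m n₂ hρe fun i hi => by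
    simpa only [Nat.cast_add, ← add_assoc, sub_add_cancel] using hψ (n₁ + i) (by lia)
  have hnormL := opNorm_transferM_factor_le hB (m - n₁) n₁
  refine ⟨m - n₁, ?_⟩
  rw [sub_add_cancel] at hleft ⊢
  rw [factor_add, sub_add_cancel, transferM_append]
  set L := transferM lam E (factor v (m - n₁) n₁)
  set R := transferM lam E (factor v m n₂)
  have hRe : ‖𝓛 R e‖ ≤ 3 * ‖e‖ := by
    calc ‖𝓛 R e‖ ≤ ‖stateVec ψ (m + n₂)‖ + ‖stateVec ψ (m + n₂) - 𝓛 R e‖ := norm_le_insert _ _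
      _ ≤ 2 * ‖e‖ + n₂ * B ^ n₂ * (ρ * ‖e‖) := add_le_add hr hright
      _ ≤ 2 * ‖e‖ + 1 * ‖e‖ := by
        rw [← mul_assoc]
        gcongr
        exact (mul_le_mul_of_nonneg_right (le_add_of_nonneg_left hleft₀) hρ.le).trans hρB.le
      _ = 3 * ‖e‖ := by ring
  have herr : opNorm L * ‖𝓛 L (stateVec ψ (m - n₁)) - e‖ ≤ ‖e‖ := by
    rw [norm_sub_rev]
    calc opNorm L * ‖e - 𝓛 L (stateVec ψ (m - n₁))‖ ≤ B ^ n₁ * (n₁ * B ^ n₁ * (ρ * ‖e‖)) := by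
          gcongr
      _ = B ^ n₁ * (n₁ * B ^ n₁) * ρ * ‖e‖ := by ring
      _ ≤ 1 * ‖e‖ := by
        gcongr
        exact (mul_le_mul_of_nonneg_right (le_add_of_nonneg_right hright₀) hρ.le).trans hρB.le
      _ = ‖e‖ := one_mul _
  exact opNorm_mul_le_three_mul_add (det_transferM _ _ _) hm hl hRe herr

end IsSchrodingerOperator

/-! ### Growth of the transfer matrices -/

section Growth

variable {lam : ℝ} {E : ℂ} {v : ℤ → ℝ} {B : ℝ}

/-- The logarithm of the norm of the transfer matrix over `v_k … v_{k+n-1}`, a subadditive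
cocycle over the shift. -/
noncomputable def logNorm (lam : ℝ) (E : ℂ) (v : ℤ → ℝ) (k : ℤ) (n : ℕ) : ℝ :=
  Real.log (opNorm (transferM lam E (factor v k n)))

/-- The growth over all factors of length `n`: `supLogNorm lam E v n / n` converges to the
uniform upper Lyapunov exponent. The supremum is `0` by convention if the transfer matrices are
unbounded. -/
noncomputable def supLogNorm (lam : ℝ) (E : ℂ) (v : ℤ → ℝ) (n : ℕ) : ℝ := ⨆ k, logNorm lam E v k n

lemma opNorm_transferM_pos (lam : ℝ) (E : ℂ) (w : List ℝ) : 0 < opNorm (transferM lam E w) :=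
  zero_lt_one.trans_le (one_le_opNorm_transferM lam E w)

variable (lam E v) in
lemma logNorm_nonneg (k : ℤ) (n : ℕ) : 0 ≤ logNorm lam E v k n :=
  Real.log_nonneg (one_le_opNorm_transferM _ _ _)

variable (lam E v) in
lemma logNorm_add_le (k : ℤ) (m n : ℕ) :
    logNorm lam E v k (m + n) ≤ logNorm lam E v k m + logNorm lam E v (k + m) n := by
  have hpos := opNorm_transferM_pos lam E
  rw [logNorm, logNorm, logNorm, add_comm (Real.log _),
    ← Real.log_mul (hpos _).ne' (hpos _).ne']
  refine Real.log_le_log (hpos _) ?_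
  rw [factor_add, transferM_append]
  exact opNorm_mul_le _ _

lemma logNorm_le_supLogNorm (hB : ∀ k, opNorm (transferT lam E (v k)) ≤ B) (k : ℤ) (n : ℕ) :
    logNorm lam E v k n ≤ supLogNorm lam E v n := by
  refine le_ciSup (f := fun k => logNorm lam E v k n) ⟨Real.log (B ^ n), ?_⟩ k
  rintro _ ⟨k, rfl⟩
  exact Real.log_le_log (opNorm_transferM_pos _ _ _) (opNorm_transferM_factor_le hB k n)

lemma subadditive_supLogNorm (hB : ∀ k, opNorm (transferT lam E (v k)) ≤ B) :
    Subadditive (supLogNorm lam E v) := fun m n =>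
  ciSup_le fun k => (logNorm_add_le lam E v k m n).trans
    (add_le_add (logNorm_le_supLogNorm hB k m) (logNorm_le_supLogNorm hB (k + m) n))

variable (lam E v) in
lemma bddBelow_supLogNorm_div : BddBelow (Set.range fun n : ℕ => supLogNorm lam E v n / n) := by
  refine ⟨0, ?_⟩
  rintro _ ⟨n, rfl⟩
  exact div_nonneg (Real.iSup_nonneg fun k => logNorm_nonneg lam E v k n) n.cast_nonneg

end Growth

lemma exists_forall_le_mul_add_of_lim_lt {u : ℕ → ℝ} (hu : Subadditive u)
    (hbdd : BddBelow (Set.range fun n => u n / n)) {Γ : ℝ} (hΓ : hu.lim < Γ) :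
    ∃ C, ∀ n : ℕ, u n ≤ Γ * n + C := by
  have hev : ∀ᶠ n : ℕ in atTop, u n - Γ * n ≤ 0 := by
    filter_upwards [(hu.tendsto_lim hbdd).eventually_lt_const hΓ, eventually_gt_atTop 0]
      with n hn hn₀
    rw [div_lt_iff₀ (by exact_mod_cast hn₀)] at hn
    exact (sub_neg.2 hn).le
  obtain ⟨C, hC⟩ := (isBoundedUnder_of_eventually_le hev).bddAbove_range
  exact ⟨C, fun n => by linarith [hC ⟨n, rfl⟩]⟩

/-! ### Recurrence -/

/-- At infinitely many scales `n`, every factor of length `n` of `v` starts within distance `K n`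
to the right of every site: the recurrence function `R` of `v` satisfies
`liminf R(n) / n < ∞`. -/
def FrequentlyLinearlyRecurrent (v : ℤ → ℝ) : Prop :=
  ∃ K : ℕ, ∃ᶠ n in atTop, ∀ k l : ℤ, ∃ j ≤ K * n, factor v (k + j) n = factor v l n

lemma FrequentlyLinearlyRecurrent.finite_range {v : ℤ → ℝ} (hv : FrequentlyLinearlyRecurrent v) :
    (Set.range v).Finite := by
  obtain ⟨K, hK⟩ := hv
  obtain ⟨n, hrec, hn⟩ := (hK.and_eventually (eventually_gt_atTop 0)).exists
  refine ((Set.finite_Iic (K * n)).image fun j : ℕ => v j).subset ?_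
  rintro _ ⟨l, rfl⟩
  obtain ⟨j, hj, hjl⟩ := hrec 0 l
  have hhead := congrArg (List.take 1) hjl
  rw [take_factor _ _ hn, take_factor _ _ hn] at hhead
  exact ⟨j, hj, by simpa [factor] using hhead⟩

namespace IsSchrodingerOperator

variable {lam : ℝ} {v : ℤ → ℝ} {H : ℓ²(ℤ) →L[ℂ] ℓ²(ℤ)} {E : ℂ} {B : ℝ}

lemma exists_logNorm_add_le (hH : IsSchrodingerOperator lam v H) (hE : E ∈ spectrum ℂ H)
    (hB : ∀ k, opNorm (transferT lam E (v k)) ≤ B) (n₁ n₂ : ℕ) :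
    ∃ k : ℤ, logNorm lam E v k (n₁ + n₂) ≤
      Real.log 6 + max (logNorm lam E v k n₁) (logNorm lam E v (k + n₁) n₂) := by
  obtain ⟨k, hk⟩ := hH.exists_opNorm_transferM_factor_add_le hE hB n₁ n₂
  have hpos := opNorm_transferM_pos lam E
  refine ⟨k, ?_⟩
  simp only [logNorm]
  set a := opNorm (transferM lam E (factor v k n₁))
  set b := opNorm (transferM lam E (factor v (k + n₁) n₂))
  have hmax : 0 < max a b := lt_max_of_lt_left (hpos _)
  calc Real.log (opNorm (transferM lam E (factor v k (n₁ + n₂)))) ≤ Real.log (6 * max a b) := by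
        refine Real.log_le_log (hpos _) (hk.trans ?_)
        linarith [le_max_left a b, le_max_right a b]
    _ = Real.log 6 + Real.log (max a b) := Real.log_mul (by norm_num) hmax.ne'
    _ = Real.log 6 + max (Real.log a) (Real.log b) := by
        rw [Real.strictMonoOn_log.monotoneOn.map_max (hpos _) (hpos _)]

lemma exists_logNorm_le_half (hH : IsSchrodingerOperator lam v H) (hE : E ∈ spectrum ℂ H)
    (hB : ∀ k, opNorm (transferT lam E (v k)) ≤ B) {Γ C : ℝ} (hΓ : 0 ≤ Γ)
    (hC : ∀ k n, logNorm lam E v k n ≤ Γ * n + C) (n : ℕ) :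
    ∃ k : ℤ, logNorm lam E v k n ≤ Γ * (n / 2 + 1) + C + Real.log 6 := by
  obtain ⟨k, hk⟩ := hH.exists_logNorm_add_le hE hB (n / 2) (n - n / 2)
  rw [Nat.add_sub_cancel' (Nat.div_le_self n 2)] at hk
  have hhalf {i : ℕ} (hi : 2 * i ≤ n + 2) (k : ℤ) :
      logNorm lam E v k i ≤ Γ * (n / 2 + 1) + C := by
    have hi' : (2 * i : ℝ) ≤ n + 2 := by exact_mod_cast hi
    refine (hC k i).trans ?_
    gcongr
    linarith
  refine ⟨k, hk.trans ?_⟩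
  rw [add_comm]
  gcongr
  exact max_le (hhalf (by lia) _) (hhalf (by lia) _)

lemma supLogNorm_le_of_recurrent (hH : IsSchrodingerOperator lam v H) (hE : E ∈ spectrum ℂ H)
    (hB : ∀ k, opNorm (transferT lam E (v k)) ≤ B) {Γ C : ℝ} (hΓ : 0 ≤ Γ)
    (hC : ∀ n, supLogNorm lam E v n ≤ Γ * n + C) {K n : ℕ}
    (hrec : ∀ k l : ℤ, ∃ j ≤ K * n, factor v (k + j) n = factor v l n) :
    supLogNorm lam E v (K * n + n) ≤ Γ * (K * n + n / 2 + 1) + (3 * C + Real.log 6) := by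
  have hlog (k : ℤ) (n : ℕ) : logNorm lam E v k n ≤ Γ * n + C :=
    (logNorm_le_supLogNorm hB k n).trans (hC n)
  obtain ⟨l, hl⟩ := hH.exists_logNorm_le_half hE hB hΓ hlog n
  refine ciSup_le fun k => ?_
  obtain ⟨j, hj, hjl⟩ := hrec k l
  obtain ⟨r, hr⟩ := Nat.exists_eq_add_of_le hj
  have hmid : logNorm lam E v (k + j) n = logNorm lam E v l n := by rw [logNorm, hjl, logNorm]
  calc logNorm lam E v k (K * n + n) = logNorm lam E v k (j + (n + r)) := by
        rw [hr, add_assoc, add_comm r]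
    _ ≤ logNorm lam E v k j + (logNorm lam E v (k + j) n + logNorm lam E v (k + j + n) r) :=
        (logNorm_add_le _ _ _ _ _ _).trans (by gcongr; exact logNorm_add_le _ _ _ _ _ _)
    _ ≤ (Γ * j + C) + ((Γ * (n / 2 + 1) + C + Real.log 6) + (Γ * r + C)) :=
        add_le_add (hlog _ _) (add_le_add (hmid.trans_le hl) (hlog _ _))
    _ = Γ * (K * n + n / 2 + 1) + (3 * C + Real.log 6) := by
        have : (K * n : ℝ) = j + r := by exact_mod_cast hr
        rw [this]; ring

lemma lim_supLogNorm_nonpos (hH : IsSchrodingerOperator lam v H) (hE : E ∈ spectrum ℂ H)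
    (hB : ∀ k, opNorm (transferT lam E (v k)) ≤ B) (hv : FrequentlyLinearlyRecurrent v) :
    (subadditive_supLogNorm hB).lim ≤ 0 := by
  obtain ⟨K, hK⟩ := hv
  set γ := (subadditive_supLogNorm hB).lim
  by_contra! hγ
  set δ := γ / (4 * (K + 1))
  have hδ : 0 < δ := by positivity
  have hδK : δ * (K + 1) = γ / 4 := by simp only [δ]; field_simp
  obtain ⟨C, hC⟩ := exists_forall_le_mul_add_of_lim_lt (subadditive_supLogNorm hB)
    (bddBelow_supLogNorm_div lam E v) (lt_add_of_pos_right γ hδ)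
  have hbound : ∀ᶠ n : ℕ in atTop, (γ + δ) + (3 * C + Real.log 6) < γ / 4 * n :=
    (tendsto_natCast_atTop_atTop.const_mul_atTop (by positivity)).eventually_gt_atTop _
  obtain ⟨n, hrec, hn, hn₀⟩ := (hK.and_eventually (hbound.and (eventually_gt_atTop 0))).exists
  have hupper := hH.supLogNorm_le_of_recurrent hE hB (by positivity) hC hrec
  have hlower : γ * (K * n + n) ≤ supLogNorm lam E v (K * n + n) := by
    have := (subadditive_supLogNorm hB).lim_le_div (bddBelow_supLogNorm_div lam E v)
      (n := K * n + n) (by lia)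
    rw [le_div_iff₀ (by positivity)] at this
    exact_mod_cast this
  have hδn : δ * (K * n + n / 2) ≤ γ / 4 * n := by
    rw [← hδK, mul_assoc]
    refine mul_le_mul_of_nonneg_left ?_ hδ.le
    linarith [n.cast_nonneg (α := ℝ)]
  linarith

end IsSchrodingerOperator

lemma mem_SubZ_iff {v : ℤ → ℝ} {w : List ℝ} :
    w ∈ SubZ v ↔ w ≠ [] ∧ ∃ k, w = factor v k w.length := by
  simp only [SubZ, Set.mem_ofPred_eq, factor, List.pure_def, List.bind_eq_flatMap,
    ← List.map_eq_flatMap, List.map_map]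
  rfl

theorem lyapunov_uniformly_zero_on_Walpha_general {lam : ℝ} {v : ℤ → ℝ}
    {H : ℓ²(ℤ) →L[ℂ] ℓ²(ℤ)} (hH : IsSchrodingerOperator lam v H) {E : ℂ}
    (hE : E ∈ spectrum ℂ H) (hv : FrequentlyLinearlyRecurrent v) :
    ∀ ε > (0 : ℝ), ∃ N : ℕ, ∀ w ∈ SubZ v, N ≤ w.length →
      |(1 / w.length : ℝ) * Real.log (opNorm (transferM lam E w))| ≤ ε := by
  intro ε hε
  obtain ⟨B, hB⟩ := exists_forall_opNorm_transferT_le lam E hv.finite_range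
  have htendsto := (subadditive_supLogNorm hB).tendsto_lim (bddBelow_supLogNorm_div lam E v)
  obtain ⟨N, hN⟩ := eventually_atTop.1
    (htendsto.eventually_le_const ((hH.lim_supLogNorm_nonpos hE hB hv).trans_lt hε))
  refine ⟨N, fun w hw hwN => ?_⟩
  obtain ⟨-, k, hwk⟩ := mem_SubZ_iff.1 hw
  have hlog : Real.log (opNorm (transferM lam E w)) = logNorm lam E v k w.length := by
    rw [logNorm, ← hwk]
  rw [hlog, one_div_mul_eq_div,
    abs_of_nonneg (div_nonneg (logNorm_nonneg lam E v _ _) (Nat.cast_nonneg _))]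
  exact (div_le_div_of_nonneg_right (logNorm_le_supLogNorm hB _ _)
    (Nat.cast_nonneg _)).trans (hN _ hwN)

/-! ### Recurrence of Sturmian sequences -/

lemma exists_consecutive_best_approximations {α : ℝ} (hα : Irrational α) (N : ℕ) :
    ∃ (q m : ℕ) (p r : ℤ), q < m ∧ N < m ∧ (q * α - p) * (m * α - r) < 0 ∧
      |m * α - r| ≤ |q * α - p| ∧
      ∀ i : ℕ, 0 < i → i < m → ∀ k : ℤ, |q * α - p| ≤ |i * α - k| := by
  set d : ℕ → ℝ := fun i => |i * α - round (i * α)|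
  have hd_pos {i : ℕ} (hi : 0 < i) : 0 < d i :=
    abs_pos.2 (((hα.natCast_mul hi.ne').ne_int _) <| sub_eq_zero.1 ·)
  obtain ⟨q, hq, hq_min⟩ := (Finset.Icc 1 (N + 1)).exists_min_image d ⟨1, by simp⟩
  simp only [Finset.mem_Icc] at hq hq_min
  have hbetter : ∃ m, 0 < m ∧ d m < d q := by
    obtain ⟨n, hn⟩ := exists_nat_one_div_lt (hd_pos hq.1)
    obtain ⟨m, hm, -, hmn⟩ := Real.exists_nat_abs_mul_sub_round_le α n.succ_pos
    refine ⟨m, hm, (hmn.trans ?_).trans_lt hn⟩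
    gcongr
    exact n.le_succ
  set m := Nat.find hbetter
  obtain ⟨hm, hmq⟩ : 0 < m ∧ d m < d q := Nat.find_spec hbetter
  have hq_best {i : ℕ} (hi : 0 < i) (him : i < m) (k : ℤ) : d q ≤ |i * α - k| :=
    (not_lt.1 fun h => Nat.find_min hbetter him ⟨hi, h⟩).trans (round_le _ k)
  have hNm : N + 1 < m := not_le.1 fun h => hmq.not_ge (hq_min m ⟨hm, h⟩)
  have hqm : q < m := hq.2.trans_lt hNm
  refine ⟨q, m, round (q * α), round (m * α), hqm, by lia, ?_, hmq.le, fun i => hq_best⟩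
  -- otherwise the difference of the two approximations would beat `q`
  by_contra! hsign
  have hdiff := hq_best (Nat.sub_pos_of_lt hqm) (Nat.sub_lt hm hq.1)
    (round (m * α) - round (q * α))
  rw [Nat.cast_sub hqm.le, Int.cast_sub, sub_mul, sub_sub_sub_comm] at hdiff
  refine hdiff.not_gt (abs_lt_of_sq_lt_sq ?_ (abs_nonneg _))
  set s := q * α - round (q * α)
  set t := m * α - round (m * α)
  have ht_sq : t ^ 2 < s * t := by
    rw [← sq_abs, sq, ← abs_of_nonneg hsign, abs_mul]
    exact mul_lt_mul_of_pos_right hmq (hd_pos hm)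
  rw [sq_abs]
  linarith [sub_sq t s]

/-- Starting from a point of the orbit segment nearest to `0` from the right, one of the two
small rotations would lead to a nearer one. -/
lemma exists_fract_add_mul_lt {α δ : ℝ} {a b : ℕ} {p r : ℤ} (hab : 0 < a + b)
    (ha : a * α - p < 0) (hb : 0 < b * α - r) (haδ : |a * α - p| ≤ δ) (hbδ : |b * α - r| ≤ δ)
    (y : ℝ) : ∃ j < a + b, Int.fract (y + j * α) < δ := by
  rw [abs_of_neg ha] at haδ
  rw [abs_of_pos hb] at hbδ
  obtain ⟨j, hj, hj_min⟩ := (Finset.range (a + b)).exists_min_image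
    (fun j : ℕ => Int.fract (y + j * α)) ⟨0, by simpa using hab⟩
  simp only [Finset.mem_range] at hj hj_min
  refine ⟨j, hj, ?_⟩
  by_contra! hδj
  set x := y + j * α
  have hmove {i : ℕ} (hi : i < a + b) {z : ℤ} {s : ℝ} (hs : 0 < s) (hsδ : s ≤ δ)
      (hi_eq : y + i * α = x - s + z) : False := by
    refine (hj_min i hi).not_gt ?_
    rw [hi_eq, Int.fract_add_intCast, Int.fract_eq_iff.2
      ⟨sub_nonneg.2 (hsδ.trans hδj), by linarith [Int.fract_lt_one x], ⌊x⌋, ?_⟩]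
    · exact sub_lt_self _ hs
    · rw [← Int.self_sub_floor]; ring
  rcases lt_or_ge j b with hjb | hbj
  · exact hmove (i := j + a) (z := p) (by lia) (neg_pos.2 ha) haδ (by push_cast; ring)
  · refine hmove (i := j - b) (z := -r) (by lia) hb hbδ ?_
    rw [Nat.cast_sub hbj]; push_cast; ring

lemma sturmian_eq_floor_sub_floor {α : ℝ} (hα : α ∈ Set.Icc (0 : ℝ) 1) (θ : ℝ) (n : ℤ) :
    sturmian α θ n = (⌊θ + (n + 1) * α⌋ - ⌊θ + n * α⌋ : ℤ) := by
  set x := n * α + θ with hx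
  have hfloor : ⌊θ + (n + 1) * α⌋ - ⌊θ + n * α⌋ = ⌊Int.fract x + α⌋ := by
    rw [show θ + n * α = x by ring, show θ + (n + 1) * α = (⌊x⌋ : ℝ) + (Int.fract x + α) by
      rw [← add_assoc, Int.floor_add_fract]; ring, Int.floor_intCast_add, add_sub_cancel_left]
  have h₀ := Int.fract_nonneg x
  have h₁ := Int.fract_lt_one x
  rw [hfloor, sturmian, ← hx]
  split_ifs with h
  · have : ⌊Int.fract x + α⌋ = 1 := by
      rw [Int.floor_eq_iff]; push_cast; constructor <;> linarith [h.1, hα.2]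
    rw [this, Int.cast_one]
  · have hlt : Int.fract x < 1 - α := not_le.1 fun hle => h ⟨hle, h₁⟩
    have : ⌊Int.fract x + α⌋ = 0 := by
      rw [Int.floor_eq_iff]; push_cast; constructor <;> linarith [hα.1]
    rw [this, Int.cast_zero]

lemma factor_sturmian (α θ : ℝ) (k : ℤ) (n : ℕ) :
    factor (sturmian α θ) k n = factor (sturmian α (θ + k * α)) 0 n := by
  refine List.map_congr_left fun i _ => ?_
  simp only [sturmian]
  push_cast
  ring_nf

lemma fract_add_mul_sub_fract_add_mul_le {α δ : ℝ} {n : ℕ}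
    (hδ : ∀ i : ℕ, 0 < i → i ≤ n → ∀ k : ℤ, δ ≤ |i * α - k|) (θ : ℝ) {i j : ℕ} (hi : i ≤ n)
    (hj : j ≤ n) (hij : i ≠ j) :
    Int.fract (θ + i * α) - Int.fract (θ + j * α) ≤ 1 - δ := by
  have hgap (k : ℤ) : δ ≤ |(i - j) * α - k| := by
    rcases hij.lt_or_gt with h | h
    · have hji := hδ (j - i) (by lia) (by lia) (-k)
      rwa [Nat.cast_sub h.le, ← abs_neg,
        show -((j - i) * α - (-k : ℤ)) = (i - j) * α - k by push_cast; ring] at hji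
    · have hij := hδ (i - j) (by lia) (by lia) k
      rwa [Nat.cast_sub h.le] at hij
  set x := θ + i * α with hx
  set y := θ + j * α with hy
  have hxy := hgap (⌊x⌋ - ⌊y⌋ + 1)
  have hneg : Int.fract x - Int.fract y - 1 < 0 := by
    linarith [Int.fract_lt_one x, Int.fract_nonneg y]
  rw [show (i - j) * α - (⌊x⌋ - ⌊y⌋ + 1 : ℤ) = Int.fract x - Int.fract y - 1 by
    rw [← Int.self_sub_floor, ← Int.self_sub_floor, hx, hy]; push_cast; ring,
    abs_of_neg hneg] at hxy
  linarith

/-- The phases coding a given word fill an interval bounded by discontinuities `-jα`, hence at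
least as long as the gaps between these. -/
lemma exists_forall_fract_lt_factor_eq {α δ : ℝ} (hα : α ∈ Set.Icc (0 : ℝ) 1) {n : ℕ}
    (hδ : ∀ i : ℕ, 0 < i → i ≤ n → ∀ k : ℤ, δ ≤ |i * α - k|) (θ₀ : ℝ) :
    ∃ a, ∀ θ, Int.fract (θ - a) < δ →
      factor (sturmian α θ) 0 n = factor (sturmian α θ₀) 0 n := by
  obtain ⟨j₀, hj₀, hj₀_min⟩ := (Finset.range (n + 1)).exists_min_image
    (fun j : ℕ => Int.fract (θ₀ + j * α)) ⟨0, by simp⟩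
  simp only [Finset.mem_range_succ_iff] at hj₀ hj₀_min
  refine ⟨θ₀ - Int.fract (θ₀ + j₀ * α), fun θ hθ => ?_⟩
  set t := θ - (θ₀ - Int.fract (θ₀ + j₀ * α))
  have hfloor {j : ℕ} (hj : j ≤ n) : ⌊θ + j * α⌋ = ⌊θ₀ + j * α⌋ + ⌊t⌋ := by
    have hlt : Int.fract (θ₀ + j * α) - Int.fract (θ₀ + j₀ * α) + Int.fract t < 1 := by
      rcases eq_or_ne j j₀ with rfl | hne
      · simpa using Int.fract_lt_one t
      · linarith [fract_add_mul_sub_fract_add_mul_le hδ θ₀ hj hj₀ hne]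
    have hsplit : θ + j * α = (Int.fract (θ₀ + j * α) - Int.fract (θ₀ + j₀ * α) + Int.fract t) +
        (⌊θ₀ + j * α⌋ + ⌊t⌋ : ℤ) := by
      push_cast
      linarith [Int.self_sub_floor (θ₀ + j * α), Int.self_sub_floor t]
    rw [hsplit, Int.floor_add_intCast, Int.floor_eq_zero_iff.2 ⟨?_, hlt⟩, zero_add]
    linarith [hj₀_min j hj, Int.fract_nonneg t]
  refine List.map_congr_left fun i hi => ?_
  have hi : i < n := List.mem_range.1 hi
  have h₀ := hfloor hi.le
  have h₁ := hfloor (j := i + 1) hi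
  rw [Nat.cast_succ] at h₁
  rw [zero_add, sturmian_eq_floor_sub_floor hα, sturmian_eq_floor_sub_floor hα, Int.cast_natCast,
    h₀, h₁, add_sub_add_right_eq_sub]

lemma frequently_factor_sturmian_eq {α : ℝ} (hα : Irrational α) (hα₀₁ : α ∈ Set.Icc (0 : ℝ) 1) :
    ∃ᶠ n : ℕ in atTop, ∀ (θ θ' : ℝ) (k l : ℤ), ∃ j ≤ 2 * n,
      factor (sturmian α θ) (k + j) n = factor (sturmian α θ') l n := by
  refine frequently_atTop.2 fun N => ?_
  obtain ⟨q, m, p, r, hqm, hNm, hsign, hrp, hbest⟩ := exists_consecutive_best_approximations hα N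
  set δ := |q * α - p|
  have hcover (y : ℝ) : ∃ j < q + m, Int.fract (y + j * α) < δ := by
    rcases mul_neg_iff.1 hsign with ⟨hq, hm⟩ | ⟨hq, hm⟩
    · rw [add_comm]
      exact exists_fract_add_mul_lt (by lia) hm hq hrp le_rfl y
    · exact exists_fract_add_mul_lt (by lia) hq hm le_rfl hrp y
  refine ⟨m - 1, by lia, fun θ θ' k l => ?_⟩
  obtain ⟨a, ha⟩ := exists_forall_fract_lt_factor_eq hα₀₁ (n := m - 1)
    (fun i hi him => hbest i hi (by lia)) (θ' + l * α)
  obtain ⟨j, hj, hjδ⟩ := hcover (θ + k * α - a)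
  refine ⟨j, by lia, ?_⟩
  rw [factor_sturmian α θ, factor_sturmian α θ']
  refine ha _ ?_
  convert hjδ using 2
  push_cast
  ring

lemma frequentlyLinearlyRecurrent_sturmian {α : ℝ} (hα : Irrational α)
    (hα₀₁ : α ∈ Set.Icc (0 : ℝ) 1) (θ : ℝ) : FrequentlyLinearlyRecurrent (sturmian α θ) :=
  ⟨2, (frequently_factor_sturmian_eq hα hα₀₁).mono fun _ h => h θ θ⟩

lemma Walpha_subset_SubZ {α : ℝ} (hα : Irrational α) (hα₀₁ : α ∈ Set.Icc (0 : ℝ) 1) (θ' : ℝ) :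
    Walpha α ⊆ SubZ (sturmian α θ') := by
  rintro w ⟨θ, -, hw⟩
  obtain ⟨hne, l, hwl⟩ := mem_SubZ_iff.1 hw
  obtain ⟨n, hrec, hn⟩ := ((frequently_factor_sturmian_eq hα hα₀₁).and_eventually
    (eventually_ge_atTop w.length)).exists
  obtain ⟨j, -, hj⟩ := hrec θ' θ 0 l
  refine mem_SubZ_iff.2 ⟨hne, 0 + j, ?_⟩
  rw [← take_factor _ _ hn, hj, take_factor _ _ hn, ← hwl]

theorem lyapunov_uniformly_zero_on_Walpha
    (lam : ℝ) (hlam : lam ≠ 0) (α : ℝ) (hirr : Irrational α) (hα : α ∈ Set.Ioo (0 : ℝ) 1)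
    (θ' : ℝ) (hθ' : θ' ∈ Set.Ico (0 : ℝ) 1)
    (H : lp (fun _ : ℤ => ℂ) 2 →L[ℂ] lp (fun _ : ℤ => ℂ) 2)
    (hH : (∀ u : lp (fun _ : ℤ => ℂ) 2, ∀ n : ℤ,
      H u n = u (n + 1) + u (n - 1) + (lam * sturmian α θ' n : ℝ) * u n))
    (E : ℂ) (hE : E ∈ spectrum ℂ H) :
    ∀ ε > (0 : ℝ), ∃ N : ℕ, ∀ w ∈ Walpha α, N ≤ w.length →
      |(1 / w.length : ℝ) * Real.log (opNorm (transferM lam E w))| ≤ ε := by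
  intro ε hε
  have hα₀₁ : α ∈ Set.Icc (0 : ℝ) 1 := Set.Ioo_subset_Icc_self hα
  obtain ⟨N, hN⟩ := lyapunov_uniformly_zero_on_Walpha_general hH hE
    (frequentlyLinearlyRecurrent_sturmian hirr hα₀₁ θ') ε hε
  exact ⟨N, fun w hw => hN w (Walpha_subset_SubZ hirr hα₀₁ θ' hw)⟩
end

section
/- For every λ ∈ ℝ, every E ∈ ℂ, and every finite word w = w_1…w_n over {0,1}, the norms of the transfer matrices over w and over its reversal w^R = w_n…w_1 coincide: ‖M(λ,E,w)‖ = ‖M(λ,E,w^R)‖. -/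
/-!
Conjugating by `diag(1, -1)` turns the transpose of each one-step matrix `T(λ,E,a)` back into
`T(λ,E,a)`. As transposition reverses products, the transfer matrix over the reversed word is
unitarily conjugate to the transpose of the one over the word, and the operator norm is invariant
under both operations.
-/

open scoped Classical

section

open Matrix
open scoped Matrix.Norms.L2Operator

theorem semiconjBy_list_prod_map {ι M : Type*} [Monoid M] {u : M} {f g : ι → M} {l : List ι}
    (h : ∀ i ∈ l, SemiconjBy u (f i) (g i)) : SemiconjBy u (l.map f).prod (l.map g).prod := by
  induction l with
  | nil => exact SemiconjBy.one_right u
  | cons i l ih =>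
    rw [List.forall_mem_cons] at h
    simpa only [List.map_cons, List.prod_cons] using h.1.mul_right (ih h.2)

theorem norm_eq_of_semiconjBy_mem_unitary {R : Type*} [NormedRing R] [StarRing R] [CStarRing R]
    {u a b : R} (hu : u ∈ unitary R) (h : SemiconjBy u a b) : ‖a‖ = ‖b‖ := by
  rw [← CStarRing.norm_mem_unitary_mul a hu, h.eq, CStarRing.norm_mul_mem_unitary b hu]

theorem semiconjBy_transpose_list_prod {n R : Type*} [Fintype n] [DecidableEq n] [CommSemiring R]
    {U : Matrix n n R} {l : List (Matrix n n R)} (h : ∀ A ∈ l, SemiconjBy U Aᵀ A) :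
    SemiconjBy U l.prodᵀ l.reverse.prod := by
  have : SemiconjBy U (l.reverse.map transpose).prod (l.reverse.map id).prod :=
    semiconjBy_list_prod_map fun A hA => h A (List.mem_reverse.mp hA)
  rwa [List.map_id, List.map_reverse, ← transpose_list_prod] at this

theorem map_star_mulVec {m n R : Type*} [Fintype n] [NonUnitalCommSemiring R] [StarRing R]
    (A : Matrix m n R) (x : n → R) : A.map star *ᵥ x = star (A *ᵥ star x) := by
  rw [star_mulVec, star_star, ← vecMul_transpose, conjTranspose, transpose_map]

theorem norm_toLp_two_star {n E : Type*} [Fintype n] [SeminormedAddCommGroup E] [StarAddMonoid E]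
    [NormedStarGroup E] (x : n → E) : ‖WithLp.toLp 2 (star x)‖ = ‖WithLp.toLp 2 x‖ := by
  simp only [PiLp.norm_eq_of_L2, Pi.star_apply, norm_star]

section L2OpNorm

variable {𝕜 m n : Type*} [RCLike 𝕜] [Fintype m] [Fintype n] [DecidableEq n]

theorem l2_opNorm_map_star_le (A : Matrix m n 𝕜) : ‖A.map star‖ ≤ ‖A‖ := by
  refine ContinuousLinearMap.opNorm_le_bound _ (norm_nonneg A) fun x => ?_
  calc ‖WithLp.toLp 2 (A.map star *ᵥ x.ofLp)‖
      = ‖WithLp.toLp 2 (A *ᵥ star x.ofLp)‖ := by rw [map_star_mulVec, norm_toLp_two_star]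
    _ ≤ ‖A‖ * ‖WithLp.toLp 2 (star x.ofLp)‖ := l2_opNorm_mulVec A (WithLp.toLp 2 (star x.ofLp))
    _ = ‖A‖ * ‖x‖ := by rw [norm_toLp_two_star]

theorem l2_opNorm_map_star (A : Matrix m n 𝕜) : ‖A.map star‖ = ‖A‖ := by
  refine (l2_opNorm_map_star_le A).antisymm ?_
  simpa only [Matrix.map_map, star_involutive.comp_self, Matrix.map_id]
    using l2_opNorm_map_star_le (A.map star)

theorem l2_opNorm_transpose [DecidableEq m] (A : Matrix m n 𝕜) : ‖Aᵀ‖ = ‖A‖ := by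
  rw [← l2_opNorm_map_star Aᵀ, ← conjTranspose, l2_opNorm_conjTranspose]

theorem l2_opNorm_list_prod_reverse {U : Matrix n n 𝕜} (hU : U ∈ unitaryGroup n 𝕜)
    {l : List (Matrix n n 𝕜)} (h : ∀ A ∈ l, SemiconjBy U Aᵀ A) : ‖l.reverse.prod‖ = ‖l.prod‖ := by
  rw [← norm_eq_of_semiconjBy_mem_unitary hU (semiconjBy_transpose_list_prod h),
    l2_opNorm_transpose]

end L2OpNorm

/-- The Pauli matrix `σ_z = diag(1, -1)`, the unitary that conjugates the transposes of the one-step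
transfer matrices back to themselves. -/
def pauliZ : Matrix (Fin 2) (Fin 2) ℂ := !![1, 0; 0, -1]

theorem pauliZ_mem_unitaryGroup : pauliZ ∈ unitaryGroup (Fin 2) ℂ := by
  rw [mem_unitaryGroup_iff, star_eq_conjTranspose]
  ext i j
  fin_cases i <;> fin_cases j <;> simp [pauliZ, mul_apply]

theorem semiconjBy_pauliZ_transferT (lam : ℝ) (E : ℂ) (a : ℝ) :
    SemiconjBy pauliZ (transferT lam E a)ᵀ (transferT lam E a) := by
  ext i j
  fin_cases i <;> fin_cases j <;> simp [pauliZ, transferT, mul_apply]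

theorem transferM_eq_prod (lam : ℝ) (E : ℂ) (w : List ℝ) :
    transferM lam E w = (w.map (transferT lam E)).reverse.prod := by
  induction w with
  | nil => rfl
  | cons a w ih =>
    rw [transferM, ih, List.map_cons, List.reverse_cons, List.prod_append, List.prod_singleton]

theorem transferM_norm_reverse_general (lam : ℝ) (E : ℂ) (w : List ℝ) :
    opNorm (transferM lam E w) = opNorm (transferM lam E w.reverse) := by
  have semiconj : ∀ A ∈ w.map (transferT lam E), SemiconjBy pauliZ Aᵀ A :=
    List.forall_mem_map.mpr fun a _ => semiconjBy_pauliZ_transferT lam E a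
  simp only [opNorm, l2_opNorm_toEuclideanCLM, transferM_eq_prod, List.map_reverse,
    List.reverse_reverse]
  exact l2_opNorm_list_prod_reverse pauliZ_mem_unitaryGroup semiconj

end

theorem transferM_norm_reverse (lam : ℝ) (E : ℂ) (w : List ℝ)
    (hw : ∀ a ∈ w, a = 0 ∨ a = 1) :
    opNorm (transferM lam E w) = opNorm (transferM lam E w.reverse) :=
  transferM_norm_reverse_general lam E w
end
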